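/- Well-formedness of year/month addition: for every valid date D, every integer n, and every unit δ ∈ {year, month}, the value v reached by evaluating D +δ n is not ⊥ and its day component satisfies day_of(v) ≥ 1. -/

import Mathlib

/-- A value is either a date `(y, m, d)` (a triple of integers in the
Gregorian calendar) or the error element `⊥`. -/
inductive DValue : Type
  | date (y m d : ℤ) : DValue
  | bot : DValue
deriving DecidableEq

/-- `nb_days(y, m)`: the number of days of month `m` in year `y`
(meaningful for `1 ≤ m ≤ 12`). A year is leap iff it is divisible by 4
and not by 100, or divisible by 400. -/
def nbDays (y m : ℤ) : ℤ :=
  if m = 2 then (if (4 ∣ y ∧ ¬ (100 ∣ y)) ∨ 400 ∣ y then 29 else 28)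
  else if m = 4 ∨ m = 6 ∨ m = 9 ∨ m = 11 then 30
  else 31

theorem nbDays_bounds (y m : ℤ) : 28 ≤ nbDays y m ∧ nbDays y m ≤ 31 := by
  unfold nbDays; split_ifs <;> omega

/-- A date `(y, m, d)` is valid iff `1 ≤ m ≤ 12` and `1 ≤ d ≤ nb_days(y, m)`. -/
def ValidDate (y m d : ℤ) : Prop :=
  1 ≤ m ∧ m ≤ 12 ∧ 1 ≤ d ∧ d ≤ nbDays y m

/-- Year addition: `(y,m,d) +y n = (y+n,m,d)`; `⊥ +y n = ⊥`. -/
def DValue.addY : DValue → ℤ → DValue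
  | .date y m d, n => .date (y + n) m d
  | .bot, _ => .bot

/-- Month addition on a date `(y, m, d)` (with `⊥` for a month component
outside `[1,12]`):
`(y,m,d) +m n = (y,m+n,d)` if `1 ≤ m+n ≤ 12`,
`= (y+1,m,d) +m (n−12)` if `m+n > 12`, `= (y−1,m,d) +m (n+12)` if `m+n < 1`. -/
def addMonths (y m d n : ℤ) : DValue :=
  if _h : 1 ≤ m ∧ m ≤ 12 then
    if _h1 : 1 ≤ m + n ∧ m + n ≤ 12 then .date y (m + n) d
    else if _h2 : 12 < m + n then addMonths (y + 1) m d (n - 12)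
    else addMonths (y - 1) m d (n + 12)
  else .bot
termination_by (m + n - 12).toNat + (1 - (m + n)).toNat
decreasing_by all_goals omega

/-- Month addition on values: `⊥ +m n = ⊥`. -/
def DValue.addM : DValue → ℤ → DValue
  | .date y m d, n => addMonths y m d n
  | .bot, _ => .bot

/-- Day addition, following the rules:
for `(y,m,d)` with `1 ≤ d ≤ nb_days(y,m)`:
`(y,m,d) +d n = (y,m,d+n)` if `1 ≤ d+n ≤ nb_days(y,m)`;
`= ((y,m,1) +m 1) +d (n − (nb_days(y,m) − d) − 1)` if `d+n > nb_days(y,m)`;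
`= (y,m,1) +d (d−1+n)` if `d+n ≤ 0` and `d > 1`;
if `n+1 ≤ 0` then, letting `(y',m',d') = (y,m,1) +m (−1)`,
`(y,m,1) +d n = (y',m',1) +d (n + nb_days(y',m'))`.
If `d < 1` or `d > nb_days(y,m)` (or the month is out of range), the result is `⊥`. -/
def addDays (y m d n : ℤ) : DValue :=
  if _hm : 1 ≤ m ∧ m ≤ 12 then
    if _hd : 1 ≤ d ∧ d ≤ nbDays y m then
      if _h1 : 1 ≤ d + n ∧ d + n ≤ nbDays y m then .date y m (d + n)
      else if _h2 : nbDays y m < d + n then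
        match addMonths y m 1 1 with
        | .date y' m' _ => addDays y' m' 1 (n - (nbDays y m - d) - 1)
        | .bot => .bot
      else if _h3 : 1 < d then addDays y m 1 (d - 1 + n)
      else
        match _hprev : addMonths y m 1 (-1) with
        | .date y' m' _ => addDays y' m' 1 (n + nbDays y' m')
        | .bot => .bot
    else .bot
  else .bot
termination_by (if 0 ≤ n then n else 62 - n).toNat
decreasing_by
  · split_ifs <;> omega
  · split_ifs <;> omega
  · have h28 := nbDays_bounds y' m'
    split_ifs <;> omega

/-- Day addition on values: `⊥ +d n = ⊥`. -/
def DValue.addD : DValue → ℤ → DValue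
  | .date y m d, n => addDays y m d n
  | .bot, _ => .bot

/-- Rounding modes: down (`↓`), up (`↑`) and error (`⊥`). -/
inductive RMode : Type
  | down | up | err
deriving DecidableEq

/-- Rounding `rnd_r`: if `1 ≤ d ≤ nb_days(y,m)` then `rnd_r(y,m,d) = (y,m,d)`;
if `d > nb_days(y,m)` then `rnd_↓(y,m,d) = (y,m,nb_days(y,m))`,
`rnd_↑(y,m,d) = (y',m',1)` where `(y',m',d') = (y,m,d) +m 1`, and
`rnd_⊥(y,m,d) = ⊥`; if `d < 1` then `rnd_r(y,m,d) = ⊥`; `rnd_r(⊥) = ⊥`. -/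
def rnd (r : RMode) : DValue → DValue
  | .date y m d =>
    if 1 ≤ d ∧ d ≤ nbDays y m then .date y m d
    else if d < 1 then .bot
    else
      match r with
      | .down => .date y m (nbDays y m)
      | .up =>
        match addMonths y m d 1 with
        | .date y' m' _ => .date y' m' 1
        | .bot => .bot
      | .err => .bot
  | .bot => .bot

/-- A period `(py, pm, pd)`: a number of years, months and days. -/
structure Period : Type where
  py : ℤ
  pm : ℤ
  pd : ℤ
deriving DecidableEq

/-- Derived addition of a period with rounding mode `r`:
`e +r (py, pm, pd) = rnd_r((e +y py) +m pm) +d pd`. -/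
def addPeriod (r : RMode) (e : DValue) (p : Period) : DValue :=
  ((rnd r ((e.addY p.py).addM p.pm)).addD p.pd)

/-- Strict lexicographic order on dates. -/
def DateLt (y1 m1 d1 y2 m2 d2 : ℤ) : Prop :=
  y1 < y2 ∨ (y1 = y2 ∧ (m1 < m2 ∨ (m1 = m2 ∧ d1 < d2)))

/-- Large lexicographic order on dates. -/
def DateLe (y1 m1 d1 y2 m2 d2 : ℤ) : Prop :=
  y1 < y2 ∨ (y1 = y2 ∧ (m1 < m2 ∨ (m1 = m2 ∧ d1 ≤ d2)))

/-- Comparison lifted to values: it holds only between two dates. -/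
def DValue.lt : DValue → DValue → Prop
  | .date y1 m1 d1, .date y2 m2 d2 => DateLt y1 m1 d1 y2 m2 d2
  | _, _ => False

/-- Comparison lifted to values: it holds only between two dates. -/
def DValue.le : DValue → DValue → Prop
  | .date y1 m1 d1, .date y2 m2 d2 => DateLe y1 m1 d1 y2 m2 d2
  | _, _ => False

/-- A value is a valid date: it is not `⊥` and its components are valid. -/
def IsValidDate : DValue → Prop
  | .date y m d => ValidDate y m d
  | .bot => False

def yearOf : DValue → ℤ
  | .date y _ _ => y
  | .bot => 0

def monthOf : DValue → ℤ
  | .date _ m _ => m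
  | .bot => 0

def dayOf : DValue → ℤ
  | .date _ _ d => d
  | .bot => 0

/-- Date units: year, month, day. -/
inductive DUnit : Type
  | year | month | day
deriving DecidableEq

/-- Addition of `n` units to a value. -/
def addU : DUnit → DValue → ℤ → DValue
  | .year, v, n => v.addY n
  | .month, v, n => v.addM n
  | .day, v, n => v.addD n

/-- Componentwise addition of periods. -/
def Period.add (p q : Period) : Period :=
  ⟨p.py + q.py, p.pm + q.pm, p.pd + q.pd⟩

theorem addMonths_eq_date (y m d n : ℤ) (hm : 1 ≤ m ∧ m ≤ 12) :
    addMonths y m d n = .date (y + (m + n - 1) / 12) ((m + n - 1) % 12 + 1) d := by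
  fun_induction addMonths y m d n with
  | case1 y n _ in_range =>
    have quotient_eq_zero : (m + n - 1) / 12 = 0 := by omega
    have remainder_eq : (m + n - 1) % 12 = m + n - 1 := by omega
    rw [quotient_eq_zero, remainder_eq, add_zero, sub_add_cancel]
  | case2 y n _ _ _ ih =>
    rw [ih, DValue.date.injEq]
    omega
  | case3 y n _ _ _ ih =>
    rw [ih, DValue.date.injEq]
    omega
  | case4 y n month_invalid => exact absurd hm month_invalid

theorem wellFormedness_year_month_addition_general (y m d n : ℤ) (δ : DUnit)
    (hδ : δ = DUnit.year ∨ δ = DUnit.month) (hm : 1 ≤ m ∧ m ≤ 12) :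
    addU δ (DValue.date y m d) n ≠ DValue.bot ∧
      dayOf (addU δ (DValue.date y m d) n) = d := by
  rcases hδ with rfl | rfl
  · exact ⟨DValue.noConfusion, rfl⟩
  · rw [addU, DValue.addM, addMonths_eq_date y m d n hm]
    exact ⟨DValue.noConfusion, rfl⟩

/-- **Well-formedness of year/month addition**: for every valid date `D`, every
integer `n`, and every unit `δ ∈ {year, month}`, the value `v` reached by
evaluating `D +δ n` is not `⊥` and its day component satisfies `day_of(v) ≥ 1`. -/
theorem wellFormedness_year_month_addition (y m d n : ℤ) (δ : DUnit)
    (hδ : δ = DUnit.year ∨ δ = DUnit.month) (h : ValidDate y m d) :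
    addU δ (DValue.date y m d) n ≠ DValue.bot ∧
      1 ≤ dayOf (addU δ (DValue.date y m d) n) := by
  obtain ⟨one_le_m, m_le, one_le_d, -⟩ := h
  exact (wellFormedness_year_month_addition_general y m d n δ hδ ⟨one_le_m, m_le⟩).imp_right
    fun day_eq => one_le_d.trans_eq day_eq.symm
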